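/- Let m be a positive integer, let X be a countable subset of ℂ^m, and let K be a dense subset of ℂ. For each u ∈ X fix a dense subset E_u ⊆ ℂ, and suppose that if (0,…,0) ∈ X then E_{(0,…,0)} ∩ K ≠ ∅. Then the set of transcendental entire functions f ∈ K[[z₁,…,z_m]] such that f(u) ∈ E_u for all u ∈ X is uncountable. -/

import Mathlib

open scoped BigOperators

/-!
To `x ∈ ℓ¹` attach the entire function `∑ k, x k / |k|! * z ^ k`. The Taylor coefficients and the
evaluations at distinct nonzero points are continuous functionals on `ℓ¹`, and they are linearly
independent because the characters `k ↦ u ^ k` are. For countably many linearly independent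
functionals on a Banach space and dense targets, successive ever smaller corrections along dual
vectors produce a single vector that all of them send into their targets.

Aiming every nonconstant coefficient at `K \ {0}` makes the function transcendental: an algebraic
entire function grows polynomially on complex lines, hence is a polynomial. Uncountability is
diagonalization: for countably many candidates `g`, aim the value at one more point `w` at the
complement of the countable set of all `g w`.
-/

open Filter Topology Bornology Asymptotics Finset
open scoped lp ENNReal

theorem exists_seq_tendsto_of_forall_exists_dist_le {α : Type*} [PseudoMetricSpace α]
    [CompleteSpace α] {r : ℕ → α → α → Prop}
    (hr : ∀ n x, ∀ ε > 0, ∃ x', dist x x' ≤ ε ∧ r n x x') (y : α) :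
    ∃ (x : ℕ → α) (z : α), x 0 = y ∧ (∀ n, r n (x n) (x (n + 1))) ∧ Tendsto x atTop (𝓝 z) := by
  choose next next_near next_rel using fun n x => hr n x ((1 / 2) ^ n) (by positivity)
  let x : ℕ → α := fun n => Nat.rec y next n
  have x_cauchy : CauchySeq x := cauchySeq_of_le_geometric (1 / 2) 1 (by norm_num) fun n => by
    simpa only [one_mul] using next_near n (x n)
  obtain ⟨z, hz⟩ := cauchySeq_tendsto_of_complete x_cauchy
  exact ⟨x, z, rfl, fun n => next_rel n (x n), hz⟩

section DualVectors

theorem exists_dual_vector_of_linearIndependent {ι K V : Type*} [Field K] [AddCommGroup V]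
    [Module K V] {φ : ι → V →ₗ[K] K} (hφ : LinearIndependent K φ) {s : Finset ι} {i : ι}
    (hi : i ∉ s) : ∃ x, (∀ j ∈ s, φ j x = 0) ∧ φ i x = 1 := by
  obtain ⟨x, hxs, hxi⟩ : ∃ x, (∀ j ∈ s, φ j x = 0) ∧ φ i x ≠ 0 := by
    by_contra! hker
    refine hφ.notMem_span_image (s := s) (x := i) hi ?_
    rw [Set.image_eq_range]
    refine mem_span_of_iInf_ker_le_ker fun x hx => hker x fun j hj => ?_
    exact (Submodule.mem_iInf _).1 hx ⟨j, hj⟩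
  exact ⟨(φ i x)⁻¹ • x, fun j hj => by simp [hxs j hj], by simp [hxi]⟩

variable {ι 𝕜 V : Type*} [NontriviallyNormedField 𝕜] [NormedAddCommGroup V] [NormedSpace 𝕜 V]
  {φ : ι → V →L[𝕜] 𝕜} {D : ι → Set 𝕜}

theorem exists_norm_sub_le_apply_mem (hφ : LinearIndependent 𝕜 φ)
    {s : Finset ι} {i : ι} (hi : i ∉ s) (hD : Dense (D i)) (y : V) {ε : ℝ} (hε : 0 < ε) :
    ∃ x, ‖x - y‖ ≤ ε ∧ (∀ j ∈ s, φ j x = φ j y) ∧ φ i x ∈ D i := by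
  have hφ' : LinearIndependent 𝕜 fun i => (φ i : V →ₗ[𝕜] 𝕜) :=
    hφ.map' (ContinuousLinearMap.coeLM 𝕜)
      (LinearMap.ker_eq_bot.2 ContinuousLinearMap.coe_injective)
  obtain ⟨v, hvs, hvi⟩ := exists_dual_vector_of_linearIndependent hφ' hi
  obtain ⟨d, hdD, hd⟩ := hD.exists_dist_lt (φ i y) (show 0 < ε / (‖v‖ + 1) by positivity)
  simp only [ContinuousLinearMap.coe_coe] at hvs hvi
  refine ⟨y + (d - φ i y) • v, ?_, fun j hj => by simp [hvs j hj], by simpa [hvi] using hdD⟩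
  rw [dist_comm, dist_eq_norm, lt_div_iff₀ (by positivity)] at hd
  calc ‖y + (d - φ i y) • v - y‖ = ‖d - φ i y‖ * ‖v‖ := by rw [add_sub_cancel_left, norm_smul]
    _ ≤ ‖d - φ i y‖ * (‖v‖ + 1) := by gcongr; simp
    _ ≤ ε := hd.le

theorem exists_forall_apply_mem_of_linearIndependent [Countable ι] [CompleteSpace V]
    (hφ : LinearIndependent 𝕜 φ) (s : Finset ι)
    (hD : ∀ i ∉ s, Dense (D i)) (y : V) :
    ∃ x, (∀ i ∈ s, φ i x = φ i y) ∧ ∀ i ∉ s, φ i x ∈ D i := by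
  classical
  cases isEmpty_or_nonempty ι with
  | inl _ => exact ⟨y, fun _ _ => rfl, isEmptyElim⟩
  | inr _ =>
  obtain ⟨e, he⟩ := exists_surjective_nat ι
  let t : ℕ → Finset ι := fun n => s ∪ (range n).image e
  have mem_t {n : ℕ} {j : ι} : j ∈ t n ↔ j ∈ s ∨ ∃ k < n, e k = j := by simp [t]
  have correct (n : ℕ) (x : V) (ε : ℝ) (hε : 0 < ε) : ∃ x', dist x x' ≤ ε ∧
      (∀ j ∈ t n, φ j x' = φ j x) ∧ (e n ∉ t n → φ (e n) x' ∈ D (e n)) := by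
    by_cases hn : e n ∈ t n
    · exact ⟨x, by simpa using hε.le, fun _ _ => rfl, fun h => (h hn).elim⟩
    · obtain ⟨x', hx'x, hx't, hx'D⟩ := exists_norm_sub_le_apply_mem hφ hn
        (hD _ fun h => hn (mem_t.2 (.inl h))) x hε
      exact ⟨x', by rwa [dist_comm, dist_eq_norm], hx't, fun _ => hx'D⟩
  obtain ⟨x, z, rfl, hx, hz⟩ := exists_seq_tendsto_of_forall_exists_dist_le correct y
  have apply_limit {n : ℕ} {j : ι} (hj : j ∈ t n) : φ j z = φ j (x n) := by
    refine tendsto_nhds_unique (((φ j).continuous.tendsto z).comp hz)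
      (tendsto_const_nhds.congr' ?_)
    filter_upwards [eventually_ge_atTop n] with k hk
    induction k, hk using Nat.le_induction with
    | base => rfl
    | succ k hnk ih =>
      exact ih.trans ((hx k).1 j
        (mem_t.2 ((mem_t.1 hj).imp_right fun ⟨l, hl, hlj⟩ => ⟨l, hl.trans_le hnk, hlj⟩))).symm
  refine ⟨z, fun i hi => apply_limit (mem_t.2 (.inl hi)), fun i hi => ?_⟩
  have hi_find := Nat.find_spec (he i)
  have new : e (Nat.find (he i)) ∉ t (Nat.find (he i)) := by
    rw [hi_find, mem_t]
    rintro (hs | ⟨k, hk, hki⟩)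
    exacts [hi hs, Nat.find_min (he i) hk hki]
  have := (hx (Nat.find (he i))).2 new
  rwa [hi_find, ← apply_limit (mem_t.2 (.inr ⟨_, Nat.lt_succ_self _, hi_find⟩))] at this

end DualVectors

section Moments

theorem norm_prod_pow_le {σ 𝕜 : Type*} [Fintype σ] [NormedField 𝕜] (z : σ → 𝕜)
    (k : σ → ℕ) : ‖∏ i, z i ^ k i‖ ≤ ‖z‖ ^ ∑ i, k i := by
  simp_rw [norm_prod, norm_pow, ← prod_pow_eq_pow_sum]
  gcongr with i
  exact norm_le_pi_norm z i

variable {σ : Type*} [Fintype σ]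

/-- The monomials `k ↦ u ^ k` as characters of `ℕ ^ σ`, the setting of Dedekind's theorem on linear
independence of characters. -/
def monomialHom {R : Type*} [CommMonoid R] (u : σ → R) : Multiplicative (σ → ℕ) →* R where
  toFun k := ∏ i, u i ^ k.toAdd i
  map_one' := by simp
  map_mul' k l := by simp [pow_add, prod_mul_distrib]

theorem monomialHom_injective {R : Type*} [CommMonoid R] :
    Function.Injective (monomialHom : (σ → R) → Multiplicative (σ → ℕ) →* R) := by
  classical
  intro u v huv
  funext i
  simpa [monomialHom, Pi.single_apply, pow_ite] using
    DFunLike.congr_fun huv (Multiplicative.ofAdd (Pi.single i 1))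

theorem eq_zero_of_finite_moments {Y R : Type*} [CommRing R] [IsDomain R] {u : Y → σ → R}
    (hu : Function.Injective u) (hu0 : ∀ y, u y ≠ 0) {s : Finset Y} {b : Y → R}
    (hb : {k : σ → ℕ | ∑ y ∈ s, b y * ∏ i, u y i ^ k i ≠ 0}.Finite) : ∀ y ∈ s, b y = 0 := by
  classical
  intro y hy
  obtain ⟨j, hj⟩ := Function.ne_iff.1 (hu0 y)
  obtain ⟨N, hN⟩ := (hb.image fun k => k j).bddAbove
  obtain ⟨n, hn⟩ : ∃ n, N < n := exists_gt N
  have moments_eq_zero (k : σ → ℕ) : ∑ y ∈ s, b y * u y j ^ n * ∏ i, u y i ^ k i = 0 := by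
    have shift : ∑ y ∈ s, b y * u y j ^ n * ∏ i, u y i ^ k i =
        ∑ y ∈ s, b y * ∏ i, u y i ^ (Pi.single j n + k : σ → ℕ) i := by
      simp_rw [Pi.add_apply, pow_add, prod_mul_distrib]
      simp [Pi.single_apply, mul_assoc]
    rw [shift]
    by_contra hne
    have hle : (Pi.single j n + k : σ → ℕ) j ≤ N :=
      hN ⟨_, hne, rfl⟩
    simp only [Pi.add_apply, Pi.single_eq_same] at hle
    lia
  have := linearIndependent_iff'.1 ((linearIndependent_monoidHom _ R).comp _
    (monomialHom_injective.comp hu)) s (fun y => b y * u y j ^ n) (by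
      funext k
      simpa [monomialHom] using moments_eq_zero k.toAdd) y hy
  exact (mul_eq_zero.1 this).resolve_right (pow_ne_zero n hj)

end Moments

section Functionals

variable {σ 𝕜 : Type*} [Fintype σ] [RCLike 𝕜]

variable (σ 𝕜) in
/-- The `k`-th Taylor coefficient of the entire function `z ↦ ∑ k, x k / |k|! * z ^ k` attached to
`x ∈ ℓ¹`. -/
noncomputable def coeffCLM (k : σ → ℕ) : ℓ¹(σ → ℕ, 𝕜) →L[𝕜] 𝕜 :=
  ((∑ i, k i).factorial : 𝕜)⁻¹ • lp.evalCLM 𝕜 (fun _ => 𝕜) 1 k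

theorem memℓp_infty_monomial_div_factorial (z : σ → 𝕜) :
    Memℓp (fun k : σ → ℕ => ((∑ i, k i).factorial : 𝕜)⁻¹ * ∏ i, z i ^ k i) ∞ := by
  refine memℓp_infty ⟨Real.exp ‖z‖, ?_⟩
  rintro _ ⟨k, rfl⟩
  calc ‖((∑ i, k i).factorial : 𝕜)⁻¹ * ∏ i, z i ^ k i‖
      ≤ ((∑ i, k i).factorial : ℝ)⁻¹ * ‖z‖ ^ ∑ i, k i := by
        rw [norm_mul, norm_inv, RCLike.norm_natCast]
        gcongr
        exact norm_prod_pow_le z k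
    _ ≤ Real.exp ‖z‖ := by
        rw [inv_mul_eq_div]
        exact Real.pow_div_factorial_le_exp _ (norm_nonneg z) _

/-- The value at `z` of the entire function `z ↦ ∑ k, x k / |k|! * z ^ k` attached to `x ∈ ℓ¹`. -/
noncomputable def evalCLM (z : σ → 𝕜) : ℓ¹(σ → ℕ, 𝕜) →L[𝕜] 𝕜 :=
  lp.dualPairing ∞ 1 (fun _ => ContinuousLinearMap.mul 𝕜 𝕜) (K := 1)
    (fun _ => ContinuousLinearMap.opNorm_mul_le 𝕜 𝕜) ⟨_, memℓp_infty_monomial_div_factorial z⟩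

theorem coeffCLM_apply (k : σ → ℕ) (x : ℓ¹(σ → ℕ, 𝕜)) :
    coeffCLM σ 𝕜 k x = ((∑ i, k i).factorial : 𝕜)⁻¹ * x k :=
  rfl

theorem coeffCLM_single (k l : σ → ℕ) : coeffCLM σ 𝕜 k (lp.single 1 l 1) =
    ((∑ i, l i).factorial : 𝕜)⁻¹ * Pi.single (M := fun _ => 𝕜) k 1 l := by
  obtain rfl | hkl := eq_or_ne k l
  · simp [coeffCLM_apply]
  · simp [coeffCLM_apply, hkl]

theorem hasSum_evalCLM (x : ℓ¹(σ → ℕ, 𝕜)) (z : σ → 𝕜) :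
    HasSum (fun k => coeffCLM σ 𝕜 k x * ∏ i, z i ^ k i) (evalCLM z x) := by
  have summable := ((memℓp_infty_monomial_div_factorial z).holder 1 x.2
    (fun _ => ContinuousLinearMap.mul 𝕜 𝕜)
    (fun _ => ContinuousLinearMap.opNorm_mul_le 𝕜 𝕜)).summable_of_one
  convert! summable.hasSum using 2 with k
  simp [coeffCLM_apply, mul_right_comm]

theorem evalCLM_single (z : σ → 𝕜) (l : σ → ℕ) : evalCLM z (lp.single 1 l 1) =
    ((∑ i, l i).factorial : 𝕜)⁻¹ * ∏ i, z i ^ l i := by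
  classical
  refine (hasSum_evalCLM _ z).unique ?_
  convert hasSum_single l fun k hk => ?_ using 1
  · simp [coeffCLM_single]
  · simp [coeffCLM_single, hk.symm]

theorem linearIndependent_coeffCLM_evalCLM {Y : Type*} {u : Y → σ → 𝕜}
    (hu : Function.Injective u) (hu0 : ∀ y, u y ≠ 0) :
    LinearIndependent 𝕜 (Sum.elim (coeffCLM σ 𝕜) fun y => evalCLM (u y)) := by
  rw [linearIndependent_iff']
  intro s g hg
  have apply_single (l : σ → ℕ) : (if l ∈ s.toLeft then g (.inl l) else 0) +
      ∑ y ∈ s.toRight, g (.inr y) * ∏ i, u y i ^ l i = 0 := by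
    refine (mul_eq_zero.1 ?_).resolve_left
      (inv_ne_zero (Nat.cast_ne_zero.2 (∑ i, l i).factorial_ne_zero))
    have := DFunLike.congr_fun hg (lp.single 1 l 1)
    rw [← s.toLeft_disjSum_toRight, sum_disjSum] at this
    simpa [coeffCLM_single, evalCLM_single, Pi.single_apply, mul_add, mul_sum, mul_comm,
      mul_left_comm, mul_assoc] using this
  have right (y : Y) (hy : y ∈ s.toRight) : g (.inr y) = 0 := by
    refine eq_zero_of_finite_moments (b := fun y => g (.inr y)) hu hu0
      (s.toLeft.finite_toSet.subset fun l hl => ?_) y hy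
    by_contra hls
    exact hl (by simpa [mt mem_coe.2 hls] using apply_single l)
  rintro (l | y) hi
  · have := apply_single l
    rwa [sum_eq_zero fun y hy => by rw [right y hy, zero_mul], add_zero,
      if_pos (mem_toLeft.2 hi)] at this
  · exact right y (mem_toRight.2 hi)

theorem exists_hasSum_of_dense {X : Set (σ → 𝕜)} (hX : X.Countable) {A : (σ → ℕ) → Set 𝕜}
    (hA : ∀ k ≠ 0, Dense (A k)) {E : (σ → 𝕜) → Set 𝕜} (hE : ∀ u ∈ X, u ≠ 0 → Dense (E u)) (c₀ : 𝕜) :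
    ∃ (c : (σ → ℕ) → 𝕜) (f : (σ → 𝕜) → 𝕜), c 0 = c₀ ∧ (∀ k ≠ 0, c k ∈ A k) ∧
      (∀ z, HasSum (fun k => c k * ∏ i, z i ^ k i) (f z)) ∧ ∀ u ∈ X, u ≠ 0 → f u ∈ E u := by
  classical
  have : Countable ↥(X \ {0}) := (hX.mono Set.sdiff_subset).to_subtype
  obtain ⟨x, hx0, hxD⟩ := exists_forall_apply_mem_of_linearIndependent
    (D := Sum.elim A fun u : ↥(X \ {0}) => E u)
    (linearIndependent_coeffCLM_evalCLM Subtype.val_injective fun u => u.2.2) {.inl 0}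
    (Sum.rec (fun k hk => hA k (by simpa using hk)) fun u _ => hE u u.2.1 u.2.2)
    (lp.single 1 0 c₀)
  refine ⟨fun k => coeffCLM σ 𝕜 k x, fun z => evalCLM z x, ?_, fun k hk => ?_, hasSum_evalCLM x,
    fun u huX hu => ?_⟩
  · simpa [coeffCLM_apply] using hx0 (.inl 0) (mem_singleton_self _)
  · exact hxD (.inl k) (by simpa using hk)
  · exact hxD (.inr ⟨u, huX, hu⟩) (by simp)

theorem apply_zero_eq_of_hasSum {c : (σ → ℕ) → 𝕜} {f : (σ → 𝕜) → 𝕜}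
    (hf : HasSum (fun k => c k * ∏ i, (0 : σ → 𝕜) i ^ k i) (f 0)) : f 0 = c 0 := by
  refine hf.unique ?_
  convert hasSum_single (0 : σ → ℕ) fun k hk => ?_ using 1
  · simp
  · obtain ⟨i, hi⟩ := Function.ne_iff.1 hk
    rw [prod_eq_zero (mem_univ i) (by simpa using hi), mul_zero]

theorem exists_hasSum_coeff_mem {X : Set (σ → 𝕜)} (hX : X.Countable) {K : Set 𝕜} (hK : Dense K)
    {E : (σ → 𝕜) → Set 𝕜} (hE : ∀ u ∈ X, u ≠ 0 → Dense (E u)) (h0 : 0 ∈ X → (E 0 ∩ K).Nonempty) :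
    ∃ (c : (σ → ℕ) → 𝕜) (f : (σ → 𝕜) → 𝕜), (∀ k, c k ∈ K) ∧ (∀ k ≠ 0, c k ≠ 0) ∧
      (∀ z, HasSum (fun k => c k * ∏ i, z i ^ k i) (f z)) ∧ ∀ u ∈ X, f u ∈ E u := by
  obtain ⟨c₀, hc₀K, hc₀E⟩ : ∃ c₀ ∈ K, 0 ∈ X → c₀ ∈ E 0 := by
    by_cases hX0 : 0 ∈ X
    · obtain ⟨c₀, hE₀, hK₀⟩ := h0 hX0
      exact ⟨c₀, hK₀, fun _ => hE₀⟩
    · obtain ⟨c₀, hK₀⟩ := hK.nonempty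
      exact ⟨c₀, hK₀, fun h => (hX0 h).elim⟩
  obtain ⟨c, f, rfl, hcK, hf, hfE⟩ :=
    exists_hasSum_of_dense hX (fun k _ => hK.sdiff_singleton 0) hE c₀
  refine ⟨c, f, fun k => ?_, fun k hk => (hcK k hk).2, hf, fun u hu => ?_⟩
  · obtain rfl | hk := eq_or_ne k 0
    exacts [hc₀K, (hcK k hk).1]
  · obtain rfl | hu0 := eq_or_ne u 0
    exacts [apply_zero_eq_of_hasSum (hf 0) ▸ hc₀E hu, hfE u hu hu0]

end Functionals

section PowerSeries

variable {σ : Type*} [Fintype σ]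

theorem exists_continuousMultilinearMap_monomial {𝕜 : Type*} [RCLike 𝕜] {k : σ → ℕ}
    {n : ℕ} (hk : ∑ i, k i = n) :
    ∃ M : ContinuousMultilinearMap 𝕜 (fun _ : Fin n => σ → 𝕜) 𝕜,
      ‖M‖ ≤ 1 ∧ ∀ z, M (fun _ => z) = ∏ i, z i ^ k i := by
  let e : (Σ i, Fin (k i)) ≃ Fin n := Fintype.equivFinOfCardEq (by simpa using hk)
  refine ⟨(ContinuousMultilinearMap.mkPiAlgebra 𝕜 (Fin n) 𝕜).compContinuousLinearMap
    fun j => ContinuousLinearMap.proj (e.symm j).1, ?_, fun z => ?_⟩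
  · refine ContinuousMultilinearMap.opNorm_le_bound zero_le_one fun v => ?_
    simp only [ContinuousMultilinearMap.compContinuousLinearMap_apply,
      ContinuousMultilinearMap.mkPiAlgebra_apply, ContinuousLinearMap.proj_apply, one_mul,
      norm_prod]
    gcongr with j
    exact norm_le_pi_norm (v j) _
  · simp [← e.prod_comp, Fintype.prod_sigma]

variable [DecidableEq σ]

/-- The homogeneous part of degree `n` of the power series with coefficients `c`. -/
noncomputable def homogeneousPart {R : Type*} [CommSemiring R] (c : (σ → ℕ) → R) (n : ℕ) :
    MvPolynomial σ R :=
  ∑ k ∈ piAntidiag univ n, MvPolynomial.monomial (Finsupp.equivFunOnFinite.symm k) (c k)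

theorem eval_homogeneousPart {R : Type*} [CommSemiring R] (c : (σ → ℕ) → R)
    (n : ℕ) (z : σ → R) : MvPolynomial.eval z (homogeneousPart c n) =
      ∑ k ∈ piAntidiag univ n, c k * ∏ i, z i ^ k i := by
  simp only [homogeneousPart, map_sum, MvPolynomial.eval_monomial, Finsupp.prod_fintype,
    pow_zero, implies_true, Finsupp.equivFunOnFinite_symm_apply_apply]

theorem homogeneousPart_ne_zero {R : Type*} [CommSemiring R] {c : (σ → ℕ) → R} {k : σ → ℕ}
    (hk : c k ≠ 0) : homogeneousPart c (∑ i, k i) ≠ 0 := by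
  refine MvPolynomial.ne_zero_iff.2 ⟨Finsupp.equivFunOnFinite.symm k, ?_⟩
  simpa [homogeneousPart, MvPolynomial.coeff_sum, MvPolynomial.coeff_monomial] using hk

variable {𝕜 : Type*} [RCLike 𝕜]

theorem hasSum_eval_homogeneousPart {c : (σ → ℕ) → 𝕜} {z : σ → 𝕜} {w : 𝕜}
    (hw : HasSum (fun k => c k * ∏ i, z i ^ k i) w) :
    HasSum (fun n => MvPolynomial.eval z (homogeneousPart c n)) w := by
  refine ((Equiv.sigmaFiberEquiv fun k : σ → ℕ => ∑ i, k i).hasSum_iff.2 hw).sigma fun n => ?_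
  have fiber : {k : σ → ℕ | ∑ i, k i = n} = (piAntidiag univ n : Finset (σ → ℕ)) := by
    ext; simp
  rw [eval_homogeneousPart]
  have := (piAntidiag univ n).hasSum fun k => c k * ∏ i, z i ^ k i
  rwa [← fiber] at this

theorem exists_hasFPowerSeriesOnBall_of_hasSum {c : (σ → ℕ) → 𝕜} {f : (σ → 𝕜) → 𝕜}
    (hf : ∀ z, HasSum (fun k => c k * ∏ i, z i ^ k i) (f z)) :
    ∃ p : FormalMultilinearSeries 𝕜 (σ → 𝕜) 𝕜, HasFPowerSeriesOnBall f p 0 ⊤ ∧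
      ∀ n z, p n (fun _ => z) = MvPolynomial.eval z (homogeneousPart c n) := by
  choose! M norm_M M_apply using fun (n : ℕ) (k : σ → ℕ) (hk : ∑ i, k i = n) =>
    exists_continuousMultilinearMap_monomial (𝕜 := 𝕜) hk
  let p : FormalMultilinearSeries 𝕜 (σ → 𝕜) 𝕜 := fun n => ∑ k ∈ piAntidiag univ n, c k • M n k
  have p_apply (n : ℕ) (z : σ → 𝕜) :
      p n (fun _ => z) = MvPolynomial.eval z (homogeneousPart c n) := by
    rw [eval_homogeneousPart]
    simp only [p, _root_.sum_apply, _root_.smul_apply, smul_eq_mul]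
    exact sum_congr rfl fun k hk => by rw [M_apply n k (by simpa using hk)]
  refine ⟨p, ⟨ENNReal.le_of_forall_nnreal_lt fun r _ => ?_, by simp, fun {y} _ => ?_⟩, p_apply⟩
  · refine p.le_radius_of_bound (∑' k, ‖c k * ∏ i, ((r : ℝ) : 𝕜) ^ k i‖) fun n => ?_
    calc ‖p n‖ * (r : ℝ) ^ n ≤ (∑ k ∈ piAntidiag univ n, ‖c k‖) * (r : ℝ) ^ n := by
          gcongr
          refine norm_sum_le_of_le _ fun k hk => ?_
          rw [norm_smul]
          exact mul_le_of_le_one_right (norm_nonneg _) (norm_M n k (by simpa using hk))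
      _ = ∑ k ∈ piAntidiag univ n, ‖c k * ∏ i, ((r : ℝ) : 𝕜) ^ k i‖ := by
          rw [sum_mul]
          refine sum_congr rfl fun k hk => ?_
          simp [prod_pow_eq_pow_sum, (mem_piAntidiag.1 hk).1]
      _ ≤ ∑' k, ‖c k * ∏ i, ((r : ℝ) : 𝕜) ^ k i‖ :=
          (hf fun _ => ((r : ℝ) : 𝕜)).summable.norm.sum_le_tsum _ fun _ _ => norm_nonneg _
  · simpa only [zero_add, p_apply] using hasSum_eval_homogeneousPart (hf y)

end PowerSeries

section Growth

open Polynomial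

theorem norm_mul_norm_leadingCoeff_le_of_isRoot {K : Type*} [NormedDivisionRing K] {p : K[X]}
    {a : K} (ha : p.IsRoot a) :
    ‖a‖ * ‖p.leadingCoeff‖ ≤ ∑ j ∈ range (p.natDegree + 1), ‖p.coeff j‖ := by
  obtain rfl | hp := eq_or_ne p 0
  · simp
  have sup_le : ((range p.natDegree).sup fun j => ‖p.coeff j‖₊) ≤
      ∑ j ∈ range p.natDegree, ‖p.coeff j‖₊ :=
    Finset.sup_le fun j hj => single_le_sum (f := fun j => ‖p.coeff j‖₊) (fun _ _ => zero_le) hj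
  have lead_ne : ‖p.leadingCoeff‖₊ ≠ 0 := by simpa using hp
  have : ‖a‖₊ * ‖p.leadingCoeff‖₊ ≤ ∑ j ∈ range (p.natDegree + 1), ‖p.coeff j‖₊ := by
    calc ‖a‖₊ * ‖p.leadingCoeff‖₊
        ≤ p.cauchyBound * ‖p.leadingCoeff‖₊ := by gcongr; exact (ha.norm_lt_cauchyBound hp).le
      _ = ((range p.natDegree).sup fun j => ‖p.coeff j‖₊) + ‖p.leadingCoeff‖₊ := by
          rw [cauchyBound, add_mul, div_mul_cancel₀ _ lead_ne, one_mul]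
      _ ≤ ∑ j ∈ range (p.natDegree + 1), ‖p.coeff j‖₊ := by
          rw [sum_range_succ, coeff_natDegree]
          gcongr
  simpa only [← coe_nnnorm, ← NNReal.coe_mul, ← NNReal.coe_sum, NNReal.coe_le_coe] using this

theorem isBigO_cobounded_pow_of_isRoot {𝕜 : Type*} [NormedField 𝕜] {q : 𝕜[X][X]}
    (hq : q ≠ 0) {N : ℕ} (hN : ∀ j, (q.coeff j).natDegree ≤ N) {g : 𝕜 → 𝕜}
    (hg : ∀ t, (q.map (evalRingHom t)).IsRoot (g t)) :
    g =O[cobounded 𝕜] fun t => t ^ N := by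
  have lead_bounded_below : (fun _ => (1 : 𝕜)) =O[cobounded 𝕜] q.leadingCoeff.eval := by
    simpa using! isBigO_cobounded_of_degree_le (P := 1) (Q := q.leadingCoeff) (by
      simpa [zero_le_degree_iff] using hq)
  have coeff_growth (j : ℕ) : (q.coeff j).eval =O[cobounded 𝕜] fun t => t ^ N := by
    simpa using! isBigO_cobounded_of_degree_le (P := q.coeff j) (Q := X ^ N) (by
      simpa using natDegree_le_iff_degree_le.1 (hN j))
  have root_bound (t : 𝕜) : ‖g t * q.leadingCoeff.eval t‖ ≤
      ‖∑ j ∈ range (q.natDegree + 1), ‖(q.coeff j).eval t‖‖ := by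
    rw [Real.norm_of_nonneg (sum_nonneg fun _ _ => norm_nonneg _), norm_mul]
    by_cases hl : evalRingHom t q.leadingCoeff = 0
    · simpa [show q.leadingCoeff.eval t = 0 from hl] using
        sum_nonneg fun j _ => norm_nonneg ((q.coeff j).eval t)
    · simpa [natDegree_map_of_leadingCoeff_ne_zero _ hl,
        leadingCoeff_map_of_leadingCoeff_ne_zero _ hl] using
        norm_mul_norm_leadingCoeff_le_of_isRoot (hg t)
  calc g =O[cobounded 𝕜] fun t => g t * q.leadingCoeff.eval t := by
        simpa using (isBigO_refl g _).mul lead_bounded_below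
    _ =O[cobounded 𝕜] fun t => ∑ j ∈ range (q.natDegree + 1), ‖(q.coeff j).eval t‖ :=
        isBigO_of_le _ root_bound
    _ =O[cobounded 𝕜] fun t => t ^ N := .fun_sum fun j _ => (coeff_growth j).norm_left

theorem iteratedDeriv_eq_zero_of_isBigO_cobounded {F : Type*} [NormedAddCommGroup F]
    [NormedSpace ℂ F] [CompleteSpace F] {g : ℂ → F} (hg : Differentiable ℂ g) {N n : ℕ}
    (hgrowth : g =O[cobounded ℂ] fun t => t ^ N) (hn : N < n) : iteratedDeriv n g 0 = 0 := by
  obtain ⟨C, hC⟩ := hgrowth.bound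
  obtain ⟨R, -, hR⟩ := hasBasis_cobounded_norm.eventually_iff.1 hC
  have cauchy_estimate : ∀ᶠ r : ℝ in atTop,
      ‖iteratedDeriv n g 0‖ ≤ n.factorial * C * (r ^ (n - N))⁻¹ := by
    filter_upwards [eventually_ge_atTop R, eventually_gt_atTop 0] with r hRr hr
    calc ‖iteratedDeriv n g 0‖ ≤ n.factorial * (C * r ^ N) / r ^ n := by
          refine Complex.norm_iteratedDeriv_le_of_forall_mem_sphere_norm_le n hr hg.diffContOnCl
            fun z hz => ?_
          have hzr : ‖z‖ = r := by simpa using hz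
          simpa [hzr] using hR (show R ≤ ‖z‖ from hzr ▸ hRr)
      _ = n.factorial * C * (r ^ (n - N))⁻¹ := by
          rw [← Nat.add_sub_of_le hn.le, pow_add, Nat.add_sub_cancel_left]
          field_simp
  have bound_tendsto : Tendsto (fun r : ℝ => n.factorial * C * (r ^ (n - N))⁻¹) atTop (𝓝 0) := by
    simpa using (tendsto_pow_atTop (Nat.sub_ne_zero_of_lt hn)).inv_tendsto_atTop.const_mul
      (n.factorial * C : ℝ)
  exact norm_le_zero_iff.1 (ge_of_tendsto bound_tendsto cauchy_estimate)

theorem apply_diag_eq_zero_of_isBigO_cobounded {E F : Type*} [NormedAddCommGroup E]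
    [NormedSpace ℂ E] [NormedAddCommGroup F] [NormedSpace ℂ F] [CompleteSpace F] {f : E → F}
    {p : FormalMultilinearSeries ℂ E F} (hp : HasFPowerSeriesOnBall f p 0 ⊤) {a : E} {N n : ℕ}
    (hgrowth : (fun t : ℂ => f (t • a)) =O[cobounded ℂ] fun t => t ^ N) (hn : N < n) :
    p n (fun _ => a) = 0 := by
  let u : ℂ →L[ℂ] E := (ContinuousLinearMap.id ℂ ℂ).smulRight a
  have hpu : HasFPowerSeriesOnBall (f ∘ u) (p.compContinuousLinearMap u) 0 _ :=
    (show HasFPowerSeriesOnBall f p (u 0) ⊤ by rwa [map_zero]).compContinuousLinearMap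
  have differentiable_f : Differentiable ℂ f := by
    simpa [Metric.eball_top, differentiableOn_univ] using hp.differentiableOn
  have deriv_zero : iteratedDeriv n (f ∘ u) 0 = 0 :=
    iteratedDeriv_eq_zero_of_isBigO_cobounded (differentiable_f.comp u.differentiable) hgrowth hn
  have factorial_smul_eq : (n.factorial : ℂ) • p n (fun _ => a) = 0 := by
    rw [Nat.cast_smul_eq_nsmul, ← deriv_zero, iteratedDeriv_eq_iteratedFDeriv,
      ← hpu.factorial_smul, FormalMultilinearSeries.compContinuousLinearMap_apply]
    simp [u, Function.comp_def]
  exact (smul_eq_zero.1 factorial_smul_eq).resolve_left (mod_cast n.factorial_ne_zero)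

end Growth

section Transcendence

open Polynomial

/-- Restriction of a polynomial to the line spanned by `a`, as a polynomial in the parameter. -/
noncomputable def restrictLine {σ R : Type*} [CommSemiring R] (a : σ → R) :
    MvPolynomial σ R →ₐ[R] R[X] :=
  MvPolynomial.aeval fun i => C (a i) * X

theorem eval_restrictLine {σ R : Type*} [CommSemiring R] (a : σ → R) (t : R)
    (r : MvPolynomial σ R) : (restrictLine a r).eval t = MvPolynomial.eval (t • a) r := by
  induction r using MvPolynomial.induction_on with
  | C x => simp [restrictLine]
  | add p q hp hq => simp [hp, hq]
  | mul_X p i hp =>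
    rw [map_mul, eval_mul, hp, map_mul]
    simp [restrictLine, mul_comm t]

theorem natDegree_restrictLine_le {σ R : Type*} [CommSemiring R] (a : σ → R)
    (r : MvPolynomial σ R) : (restrictLine a r).natDegree ≤ r.totalDegree := by
  simpa [restrictLine] using MvPolynomial.aeval_natDegree_le r le_rfl _ (n := 1) fun i =>
    (natDegree_C_mul_le _ _).trans natDegree_X_le

theorem isBigO_smul_of_isRoot {σ : Type*} {f : (σ → ℂ) → ℂ} {q : (MvPolynomial σ ℂ)[X]} {N : ℕ}
    (hN : ∀ j, (q.coeff j).totalDegree ≤ N) (hq : ∀ z, (q.map (MvPolynomial.eval z)).IsRoot (f z))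
    {a : σ → ℂ} (ha : MvPolynomial.eval a q.leadingCoeff ≠ 0) :
    (fun t : ℂ => f (t • a)) =O[cobounded ℂ] fun t => t ^ N := by
  refine isBigO_cobounded_pow_of_isRoot (q := q.map (restrictLine a : MvPolynomial σ ℂ →+* ℂ[X]))
    (fun h => ha ?_) (fun j => ?_) fun t => ?_
  · have lead_zero : restrictLine a q.leadingCoeff = 0 := by
      simpa [coeff_map] using congrArg (coeff · q.natDegree) h
    simpa [lead_zero] using (eval_restrictLine a 1 q.leadingCoeff).symm
  · simpa [coeff_map] using (natDegree_restrictLine_le a _).trans (hN j)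
  · have eval_comp : (evalRingHom t).comp (restrictLine a : MvPolynomial σ ℂ →+* ℂ[X]) =
        MvPolynomial.eval (t • a) := RingHom.ext (eval_restrictLine a t)
    rw [Polynomial.map_map, eval_comp]
    exact hq _

theorem exists_forall_coeff_eq_zero_of_isRoot {σ : Type*} [Fintype σ] {c : (σ → ℕ) → ℂ}
    {f : (σ → ℂ) → ℂ} (hf : ∀ z, HasSum (fun k => c k * ∏ i, z i ^ k i) (f z))
    {q : (MvPolynomial σ ℂ)[X]} (hq0 : q ≠ 0)
    (hq : ∀ z, (q.map (MvPolynomial.eval z)).IsRoot (f z)) :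
    ∃ N, ∀ k, N < ∑ i, k i → c k = 0 := by
  classical
  obtain ⟨p, hp, hpc⟩ := exists_hasFPowerSeriesOnBall_of_hasSum hf
  obtain ⟨N, hN⟩ : ∃ N, ∀ j, (q.coeff j).totalDegree ≤ N := by
    refine ⟨q.support.sup fun j => (q.coeff j).totalDegree, fun j => ?_⟩
    by_cases hj : j ∈ q.support
    · exact Finset.le_sup (f := fun j => (q.coeff j).totalDegree) hj
    · simp [notMem_support_iff.1 hj]
  refine ⟨N, fun k hk => ?_⟩
  by_contra hck
  obtain ⟨a, ha⟩ : ∃ a,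
      MvPolynomial.eval a (q.leadingCoeff * homogeneousPart c (∑ i, k i)) ≠ 0 := by
    by_contra! eval_zero
    exact mul_ne_zero (leadingCoeff_ne_zero.2 hq0) (homogeneousPart_ne_zero hck)
      (MvPolynomial.funext fun a => by rw [eval_zero a, map_zero])
  rw [map_mul, mul_ne_zero_iff] at ha
  exact ha.2 ((hpc _ a).symm.trans
    (apply_diag_eq_zero_of_isBigO_cobounded hp (isBigO_smul_of_isRoot hN hq ha.1) hk))

theorem exists_polynomial_isRoot_of_eval_snoc {R : Type*} [CommSemiring R] {m : ℕ}
    {f : (Fin m → R) → R} {P : MvPolynomial (Fin (m + 1)) R} (hP0 : P ≠ 0)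
    (hP : ∀ z, MvPolynomial.eval (Fin.snoc z (f z)) P = 0) :
    ∃ q : (MvPolynomial (Fin m) R)[X], q ≠ 0 ∧
      ∀ z, (q.map (MvPolynomial.eval z)).IsRoot (f z) := by
  refine ⟨MvPolynomial.finSuccEquiv R m (MvPolynomial.rename (finRotate (m + 1)) P), ?_,
    fun z => ?_⟩
  · simpa [map_eq_zero_iff _ (MvPolynomial.rename_injective _ (finRotate (m + 1)).injective)]
  · rw [IsRoot, ← MvPolynomial.eval_eq_eval_mv_eval', MvPolynomial.eval_rename, ← hP z,
      Fin.snoc_eq_cons_rotate]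
    rfl

theorem not_exists_eval_snoc_eq_zero_of_hasSum {m : ℕ} (hm : 0 < m) {c : (Fin m → ℕ) → ℂ}
    (hc : ∀ k ≠ 0, c k ≠ 0) {f : (Fin m → ℂ) → ℂ}
    (hf : ∀ z, HasSum (fun k => c k * ∏ i, z i ^ k i) (f z)) :
    ¬ ∃ P : MvPolynomial (Fin (m + 1)) ℂ, P ≠ 0 ∧
      ∀ z, MvPolynomial.eval (Fin.snoc z (f z)) P = 0 := by
  rintro ⟨P, hP0, hP⟩
  obtain ⟨q, hq0, hq⟩ := exists_polynomial_isRoot_of_eval_snoc hP0 hP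
  obtain ⟨N, hN⟩ := exists_forall_coeff_eq_zero_of_isRoot hf hq0 hq
  exact hc (Pi.single ⟨0, hm⟩ (N + 1)) (by simp) (hN _ (by simp))

end Transcendence

theorem not_countable_of_forall_exists_apply_notMem {α β : Type*} {S : Set (α → β)} (w : α)
    (hS : ∀ V : Set β, V.Countable → ∃ f ∈ S, f w ∉ V) : ¬ S.Countable := fun hcount =>
  have ⟨_, hfS, hfV⟩ := hS _ (hcount.image fun f => f w)
  hfV (Set.mem_image_of_mem _ hfS)

/-- for a countable `X ⊆ ℂ^m`, a dense `K ⊆ ℂ`, and dense targets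
`E_u ⊆ ℂ` for `u ∈ X` (with `E_0 ∩ K ≠ ∅` if `0 ∈ X`), there are uncountably many
transcendental entire functions `f ∈ K[[z₁,…,z_m]]` with `f(u) ∈ E_u` for all `u ∈ X`. -/
theorem uncountably_many_transcendental_entire_functions_several_variables
    (m : ℕ) (hm : 0 < m) (X : Set (Fin m → ℂ)) (hX : X.Countable)
    (K : Set ℂ) (hK : Dense K)
    (E : (Fin m → ℂ) → Set ℂ) (hE : ∀ u ∈ X, Dense (E u))
    (h0 : (0 : Fin m → ℂ) ∈ X → (E 0 ∩ K).Nonempty) :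
    ¬ ({f : (Fin m → ℂ) → ℂ |
        (∀ x, AnalyticAt ℂ f x) ∧
        ¬ (∃ P : MvPolynomial (Fin (m + 1)) ℂ, P ≠ 0 ∧
            ∀ z : Fin m → ℂ, MvPolynomial.eval (Fin.snoc z (f z)) P = 0) ∧
        (∃ c : (Fin m → ℕ) → ℂ, (∀ k, c k ∈ K) ∧
            ∀ z : Fin m → ℂ, HasSum (fun k : Fin m → ℕ => c k * ∏ i, z i ^ k i) (f z)) ∧
        (∀ u ∈ X, f u ∈ E u)}).Countable := by
  obtain ⟨w, hw⟩ : ((insert 0 X)ᶜ : Set (Fin m → ℂ)).Nonempty :=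
    have : Nonempty (Fin m) := ⟨⟨0, hm⟩⟩
    ((hX.insert 0).dense_compl ℂ).nonempty
  obtain ⟨hw0, hwX⟩ : w ≠ 0 ∧ w ∉ X := by simpa using hw
  refine not_countable_of_forall_exists_apply_notMem w fun V hV => ?_
  have update_dense : ∀ u ∈ insert w X, u ≠ 0 → Dense (Function.update E w Vᶜ u) := by
    rintro u (rfl | hu) -
    · simpa using hV.dense_compl ℝ
    · simpa [ne_of_mem_of_not_mem hu hwX] using hE u hu
  obtain ⟨c, f, hcK, hc0, hf, hfE⟩ := exists_hasSum_coeff_mem (hX.insert w) hK update_dense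
    (by simpa [hw0.symm] using h0)
  obtain ⟨p, hp, -⟩ := exists_hasFPowerSeriesOnBall_of_hasSum hf
  refine ⟨f, ⟨fun x => hp.analyticAt_of_mem (by simp),
    not_exists_eval_snoc_eq_zero_of_hasSum hm hc0 hf, ⟨c, hcK, hf⟩, fun u hu => ?_⟩, ?_⟩
  · simpa [ne_of_mem_of_not_mem hu hwX] using hfE u (.inr hu)
  · simpa using hfE w (.inl rfl)
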